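/- Theorem 1.3, real analytic case (classification of 3-reflective real analytic planar projective billiards). Every 3-reflective triple of real analytic line-framed curves in ℝ² is right-spherical: if (a₁,v₁), (a₂,v₂), (a₃,v₃) is a 3-reflective triple, then there exist linearly independent vectors p, q, r ∈ ℝ³ such that for every s ∈ U₁, (a₁(s),1) ∈ span{p,q} and r ∈ span{(a₁(s),1),(v₁(s),0)}; for every u ∈ U₂, (a₂(u),1) ∈ span{q,r} and p ∈ span{(a₂(u),1),(v₂(u),0)}; and for every t ∈ U₃, (a₃(t),1) ∈ span{r,p} and q ∈ span{(a₃(t),1),(v₃(t),0)} (i.e., in the projective plane the three boundary curves lie on the three sides of the triangle with vertices [p], [q], [r], and each field line passes through the opposite vertex). -/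

import Mathlib

/-- Two nonzero vectors `u`, `w` of the plane are symmetric with respect to the pair
`(v, τ)` (field direction, tangent direction): there are nonzero scalars `p`, `q` with
`p • u + q • w` on the line spanned by `τ` and `p • u - q • w` on the line spanned by `v`. -/
def PlaneSym (𝕜 : Type*) [Field 𝕜] (v τ u w : 𝕜 × 𝕜) : Prop :=
  ∃ p q : 𝕜, p ≠ 0 ∧ q ≠ 0 ∧ p • u + q • w ∈ Submodule.span 𝕜 {τ} ∧
    p • u - q • w ∈ Submodule.span 𝕜 {v}

/-- Lift of a point of the plane to homogeneous coordinates: `x ↦ (x, 1)`. -/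
def liftPt (𝕜 : Type*) [Field 𝕜] (x : 𝕜 × 𝕜) : 𝕜 × 𝕜 × 𝕜 := (x.1, x.2, 1)

/-- Lift of a direction of the plane to homogeneous coordinates: `x ↦ (x, 0)`. -/
def liftDir (𝕜 : Type*) [Field 𝕜] (x : 𝕜 × 𝕜) : 𝕜 × 𝕜 × 𝕜 := (x.1, x.2, 0)

/-!
Write `A`, `B`, `C` for the vertices of an orbit on the three curves, with `C` at time `g (s, u)`.
Move the orbit while keeping one vertex fixed and differentiate the reflection law there: doing
this for each of the three vertices gives three equations in the two partial derivatives of `g`.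
Eliminating these shows that the cubes of the two sides of a Menelaus relation for the tangent lines
at the vertices are equal, hence the relation itself, and it determines the partial derivatives of
`g`. Together with the reflection law, the Menelaus relation makes each field line pass through the
intersection of the tangent lines at the other two vertices.

Differentiating the Menelaus relation along the two-parameter family of orbits, and comparing the
two mixed second partial derivatives of `g`, forces the curvature of all three curves to vanish.
The tangent lines are therefore locally constant, and they are the sides of the required triangle;
analyticity extends this to the whole curves.
-/

open Filter Topology

/-- The determinant `x.1 * y.2 - x.2 * y.1` of two vectors of the plane, written `x ⋏ y`. It
vanishes when the two vectors are proportional. -/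
def wedge {R : Type*} [CommRing R] (x y : R × R) : R := x.1 * y.2 - x.2 * y.1

local notation:75 x:75 " ⋏ " y:76 => wedge x y

/-- The polarization `τ ⋏ u * v ⋏ w + τ ⋏ w * v ⋏ u` of the quadratic form
`x ↦ (τ ⋏ x) * (v ⋏ x)`. It vanishes when the lines spanned by `u`, `w` are harmonically
conjugate with respect to those spanned by `v`, `τ`. -/
def harmonicForm {R : Type*} [CommRing R] (v τ u w : R × R) : R :=
  τ ⋏ u * v ⋏ w + τ ⋏ w * v ⋏ u

/-! ### Harmonic quadruples of directions -/

section Ring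

variable {R : Type*} [CommRing R]

theorem wedge_anticomm (x y : R × R) : x ⋏ y = -y ⋏ x := by
  simp only [wedge]
  ring

theorem wedge_mul_wedge (x y z w : R × R) : x ⋏ y * z ⋏ w = x ⋏ z * y ⋏ w - x ⋏ w * y ⋏ z := by
  simp only [wedge]
  ring

theorem harmonicForm_comm (v τ u w : R × R) : harmonicForm v τ u w = harmonicForm v τ w u :=
  add_comm _ _

theorem wedge_mul_harmonicForm {v τ u w : R × R} (h : harmonicForm v τ u w = 0) (x : R × R) :
    u ⋏ w * harmonicForm v τ u x = 2 * (v ⋏ u) * (τ ⋏ u) * (x ⋏ w) := by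
  simp only [harmonicForm, wedge] at h ⊢
  linear_combination (u.1 * x.2 - u.2 * x.1) * h

end Ring

section Field

variable {K : Type*} [Field K] {a b c u v w x y τ : K × K}

theorem wedge_eq_zero_iff_mem_span (hx : x ≠ 0) : x ⋏ y = 0 ↔ y ∈ Submodule.span K {x} := by
  rw [Submodule.mem_span_singleton]
  refine ⟨fun h ↦ ?_, ?_⟩
  · simp only [wedge] at h
    by_cases h₁ : x.1 = 0
    · have h₂ : x.2 ≠ 0 := fun h₂ ↦ hx (Prod.ext h₁ h₂)
      exact ⟨y.2 / x.2, Prod.ext (by simp; grind) (by simp; grind)⟩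
    · exact ⟨y.1 / x.1, Prod.ext (by simp; grind) (by simp; grind)⟩
  · rintro ⟨k, rfl⟩
    simp only [wedge, Prod.smul_fst, Prod.smul_snd, smul_eq_mul]
    ring

theorem eq_zero_of_wedge_eq_zero (hxy : x ⋏ y ≠ 0) (hx : x ⋏ u = 0) (hy : y ⋏ u = 0) : u = 0 := by
  simp only [wedge] at hxy hx hy
  refine Prod.ext (mul_left_cancel₀ hxy ?_) (mul_left_cancel₀ hxy ?_)
  · rw [Prod.fst_zero]
    linear_combination y.1 * hx - x.1 * hy
  · rw [Prod.snd_zero]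
    linear_combination y.2 * hx - x.2 * hy

theorem wedge_ne_zero_of_not_collinear (h : ¬ Collinear K {a, b, c}) :
    (b - a) ⋏ (c - a) ≠ 0 := by
  have hb : b - a ≠ 0 := fun hb ↦ h <| by
    rw [sub_eq_zero.mp hb, Set.insert_eq_of_mem (Set.mem_insert a {c})]
    exact collinear_pair K a c
  rw [Ne, wedge_eq_zero_iff_mem_span hb, Submodule.mem_span_singleton]
  rintro ⟨k, hk⟩
  refine h ?_
  rw [Set.pair_comm, Set.insert_comm]
  refine collinear_insert_of_mem_affineSpan_pair ?_
  convert AffineMap.lineMap_mem_affineSpan_pair k a b using 1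
  rw [AffineMap.lineMap_apply, vsub_eq_sub, vadd_eq_add, hk, sub_add_cancel]

theorem PlaneSym.harmonicForm_eq_zero (h : PlaneSym K v τ u w) : harmonicForm v τ u w = 0 := by
  obtain ⟨p, q, hp, hq, hτ, hv⟩ := h
  obtain ⟨k, hk⟩ := Submodule.mem_span_singleton.mp hτ
  obtain ⟨l, hl⟩ := Submodule.mem_span_singleton.mp hv
  have on_tangent : p * τ ⋏ u + q * τ ⋏ w = 0 := by
    have := congr_arg (τ ⋏ ·) hk
    simp only [wedge, Prod.fst_add, Prod.snd_add, Prod.smul_fst, Prod.smul_snd,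
      smul_eq_mul] at this ⊢
    linear_combination -this
  have on_field : p * v ⋏ u - q * v ⋏ w = 0 := by
    have := congr_arg (v ⋏ ·) hl
    simp only [wedge, Prod.fst_sub, Prod.snd_sub, Prod.smul_fst, Prod.smul_snd,
      smul_eq_mul] at this ⊢
    linear_combination -this
  refine (mul_eq_zero_iff_left (mul_ne_zero hp hq)).mp ?_
  simp only [harmonicForm]
  linear_combination q * v ⋏ w * on_tangent + q * τ ⋏ w * on_field

section Reflection

variable (h : harmonicForm v τ u w = 0) (hτ : τ ⋏ v ≠ 0) (hD : u ⋏ w ≠ 0) (hu : τ ⋏ u ≠ 0)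
include h hτ hD hu

theorem field_wedge_ne_zero : v ⋏ u ≠ 0 := by
  intro hv
  have hw : v ⋏ w = 0 := by
    simp only [harmonicForm, hv, mul_zero, add_zero] at h
    exact (mul_eq_zero_iff_left hu).mp h
  refine mul_ne_zero hτ hD ?_
  rw [wedge_mul_wedge, hv, hw, mul_zero, mul_zero, sub_zero]

theorem harmonicForm_ne_zero [NeZero (2 : K)] (hx : x ⋏ w ≠ 0) : harmonicForm v τ u x ≠ 0 := by
  refine right_ne_zero_of_mul (a := u ⋏ w) ?_
  rw [wedge_mul_harmonicForm h]
  exact mul_ne_zero (mul_ne_zero (mul_ne_zero two_ne_zero (field_wedge_ne_zero h hτ hD hu)) hu) hx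

/-- The first-order variation of the reflection law at a fixed vertex, when the two other vertices
move with velocities `β • x` and `γ • y`. -/
theorem variation_of_harmonicForm [NeZero (2 : K)] {β γ : K}
    (hvar : β * harmonicForm v τ x w + γ * harmonicForm v τ u y = 0) :
    β * (τ ⋏ w) ^ 2 * u ⋏ x + γ * (τ ⋏ u) ^ 2 * w ⋏ y = 0 := by
  have moving_u := wedge_mul_harmonicForm ((harmonicForm_comm v τ w u).trans h) x
  have moving_w := wedge_mul_harmonicForm h y
  rw [harmonicForm_comm v τ w x] at moving_u
  refine (mul_eq_zero_iff_left
    (mul_ne_zero two_ne_zero (field_wedge_ne_zero h hτ hD hu))).mp ?_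
  simp only [harmonicForm, wedge] at *
  linear_combination (τ.1 * u.2 - τ.2 * u.1) *
    (γ * moving_w - β * moving_u - (u.1 * w.2 - u.2 * w.1) * hvar)
    - 2 * β * (τ.1 * w.2 - τ.2 * w.1) * (x.1 * u.2 - x.2 * u.1) * h

end Reflection

end Field

/-! ### Calculus -/

section Calculus

variable {𝕜 : Type*} [NontriviallyNormedField 𝕜]

theorem hasDerivAt_wedge {x y : 𝕜 → 𝕜 × 𝕜} {x' y' : 𝕜 × 𝕜} {t : 𝕜} (hx : HasDerivAt x x' t)
    (hy : HasDerivAt y y' t) : HasDerivAt (fun t ↦ x t ⋏ y t) (x' ⋏ y t + x t ⋏ y') t := by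
  have fst {z : 𝕜 → 𝕜 × 𝕜} {z'} (h : HasDerivAt z z' t) : HasDerivAt (fun t ↦ (z t).1) z'.1 t :=
    h.fst
  have snd {z : 𝕜 → 𝕜 × 𝕜} {z'} (h : HasDerivAt z z' t) : HasDerivAt (fun t ↦ (z t).2) z'.2 t :=
    h.snd
  exact (((fst hx).mul (snd hy)).sub ((snd hx).mul (fst hy))).congr_deriv (by
    simp only [wedge]; ring)

theorem hasDerivAt_harmonicForm {v τ u w : 𝕜 → 𝕜 × 𝕜} {v' τ' u' w' : 𝕜 × 𝕜} {t : 𝕜}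
    (hv : HasDerivAt v v' t) (hτ : HasDerivAt τ τ' t) (hu : HasDerivAt u u' t)
    (hw : HasDerivAt w w' t) :
    HasDerivAt (fun t ↦ harmonicForm (v t) (τ t) (u t) (w t))
      (harmonicForm v' (τ t) (u t) (w t) + harmonicForm (v t) τ' (u t) (w t) +
        harmonicForm (v t) (τ t) u' (w t) + harmonicForm (v t) (τ t) (u t) w') t :=
  (((hasDerivAt_wedge hτ hu).mul (hasDerivAt_wedge hv hw)).add
    ((hasDerivAt_wedge hτ hw).mul (hasDerivAt_wedge hv hu))).congr_deriv (by
      simp only [harmonicForm]; ring)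

theorem analyticAt_wedge {E : Type*} [NormedAddCommGroup E] [NormedSpace 𝕜 E]
    {x y : E → 𝕜 × 𝕜} {t : E} (hx : AnalyticAt 𝕜 x t) (hy : AnalyticAt 𝕜 y t) :
    AnalyticAt 𝕜 (fun t ↦ x t ⋏ y t) t :=
  ((analyticAt_fst.comp hx).mul (analyticAt_snd.comp hy)).sub
    ((analyticAt_snd.comp hx).mul (analyticAt_fst.comp hy))

theorem analyticAt_harmonicForm {E : Type*} [NormedAddCommGroup E] [NormedSpace 𝕜 E]
    {v τ u w : E → 𝕜 × 𝕜} {t : E} (hv : AnalyticAt 𝕜 v t) (hτ : AnalyticAt 𝕜 τ t)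
    (hu : AnalyticAt 𝕜 u t) (hw : AnalyticAt 𝕜 w t) :
    AnalyticAt 𝕜 (fun t ↦ harmonicForm (v t) (τ t) (u t) (w t)) t :=
  ((analyticAt_wedge hτ hu).mul (analyticAt_wedge hv hw)).add
    ((analyticAt_wedge hτ hw).mul (analyticAt_wedge hv hu))

theorem sum_div_eq_of_prod_eq {f₁ f₂ f₃ g₁ g₂ g₃ : 𝕜 → 𝕜} {f₁' f₂' f₃' g₁' g₂' g₃' x : 𝕜}
    (h : ∀ᶠ y in 𝓝 x, f₁ y * f₂ y * f₃ y = g₁ y * g₂ y * g₃ y)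
    (hf₁ : HasDerivAt f₁ f₁' x) (hf₂ : HasDerivAt f₂ f₂' x) (hf₃ : HasDerivAt f₃ f₃' x)
    (hg₁ : HasDerivAt g₁ g₁' x) (hg₂ : HasDerivAt g₂ g₂' x) (hg₃ : HasDerivAt g₃ g₃' x)
    (hf : f₁ x * f₂ x * f₃ x ≠ 0) :
    f₁' / f₁ x + f₂' / f₂ x + f₃' / f₃ x = g₁' / g₁ x + g₂' / g₂ x + g₃' / g₃ x := by
  have log_deriv {p q r : 𝕜 → 𝕜} {p' q' r' : 𝕜} (hp : HasDerivAt p p' x)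
      (hq : HasDerivAt q q' x) (hr : HasDerivAt r r' x) (h0 : p x * q x * r x ≠ 0) :
      HasDerivAt (fun y ↦ p y * q y * r y) (p x * q x * r x * (p' / p x + q' / q x + r' / r x))
        x := by
    simp only [mul_ne_zero_iff] at h0
    obtain ⟨⟨hp0, hq0⟩, hr0⟩ := h0
    exact ((hp.mul hq).mul hr).congr_deriv (by simp only [Pi.mul_apply]; field_simp)
  have hg : g₁ x * g₂ x * g₃ x ≠ 0 := h.self_of_nhds ▸ hf
  have := (log_deriv hf₁ hf₂ hf₃ hf).unique ((log_deriv hg₁ hg₂ hg₃ hg).congr_of_eventuallyEq h)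
  rw [← h.self_of_nhds] at this
  exact mul_left_cancel₀ hf this

theorem hasDerivAt_add_smul {E : Type*} [NormedAddCommGroup E] [NormedSpace 𝕜 E] (z v : E)
    (t : 𝕜) : HasDerivAt (fun τ : 𝕜 ↦ z + τ • v) v t := by
  simpa only [one_smul, id_eq] using ((hasDerivAt_id t).smul_const v).const_add z

theorem exists_hasLineDerivAt_fderiv [IsRCLikeNormedField 𝕜] {E F : Type*}
    [NormedAddCommGroup E] [NormedSpace 𝕜 E] [NormedAddCommGroup F] [NormedSpace 𝕜 F]
    {g : E → F} {z : E} (hg : ContDiffAt 𝕜 2 g z) (v w : E) :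
    ∃ G : F, HasLineDerivAt 𝕜 (fun z ↦ fderiv 𝕜 g z v) G z w ∧
      HasLineDerivAt 𝕜 (fun z ↦ fderiv 𝕜 g z w) G z v := by
  have hg' : HasFDerivAt (fderiv 𝕜 g) (fderiv 𝕜 (fderiv 𝕜 g) z) z :=
    ((hg.fderiv_right (m := 1) (by norm_num)).differentiableAt (by norm_num)).hasFDerivAt
  have along (x : E) : HasFDerivAt (fun z ↦ fderiv 𝕜 g z x)
      ((ContinuousLinearMap.apply 𝕜 F x).comp (fderiv 𝕜 (fderiv 𝕜 g) z)) z :=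
    (ContinuousLinearMap.apply 𝕜 F x).hasFDerivAt.comp z hg'
  have symm : fderiv 𝕜 (fderiv 𝕜 g) z v w = fderiv 𝕜 (fderiv 𝕜 g) z w v :=
    hg.isSymmSndFDerivAt (by simp) v w
  exact ⟨_, (along v).hasLineDerivAt w, symm ▸ (along w).hasLineDerivAt v⟩

theorem contDiffAt_of_implicit {𝕜 : Type*} [RCLike 𝕜] {E : Type*} [NormedAddCommGroup E]
    [NormedSpace 𝕜 E] [CompleteSpace E] {n : ℕ∞} (hn : n ≠ 0) {f : E × 𝕜 → 𝕜} {g : E → 𝕜}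
    {z : E} {f' : 𝕜} (hf : ContDiffAt 𝕜 n f (z, g z))
    (hf' : HasDerivAt (fun r ↦ f (z, r)) f' (g z)) (hf'0 : f' ≠ 0) (hg : ContinuousAt g z)
    (hfg : ∀ᶠ w in 𝓝 z, f (w, g w) = 0) : ContDiffAt 𝕜 n g z := by
  have hn : (n : WithTop ℕ∞) ≠ 0 := mod_cast hn
  have partial_eq : fderiv 𝕜 f (z, g z) (0, 1) = f' :=
    ((hf.differentiableAt hn).hasFDerivAt.comp_hasDerivAt (g z)
      ((hasDerivAt_const (g z) z).prodMk (hasDerivAt_id (g z)))).unique hf'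
  have invertible : (fderiv 𝕜 f (z, g z) ∘L ContinuousLinearMap.inr 𝕜 E 𝕜).IsInvertible := by
    refine ⟨ContinuousLinearEquiv.unitsEquivAut 𝕜 (Units.mk0 f' hf'0), ?_⟩
    ext
    simp [partial_eq]
  have local_graph := hf.eventually_apply_eq_iff_implicitFunction hn invertible
  refine (hf.contDiffAt_implicitFunction hn invertible).congr_of_eventuallyEq ?_
  filter_upwards [(continuousAt_id.prodMk hg).eventually local_graph, hfg] with w hw hfw
  exact (hw.mp (hfw.trans hfg.self_of_nhds.symm)).symm

theorem mul_eq_mul_of_wronskian_eq_zero {𝕜 : Type*} [RCLike 𝕜] {U : Set 𝕜} (hU : IsOpen U)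
    (hUc : IsPreconnected U) {f h f' h' : 𝕜 → 𝕜} (hf : ∀ t ∈ U, HasDerivAt f (f' t) t)
    (hh : ∀ t ∈ U, HasDerivAt h (h' t) t) (hh0 : ∀ t ∈ U, h t ≠ 0)
    (hW : ∀ t ∈ U, f' t * h t = f t * h' t) {s t : 𝕜} (hs : s ∈ U) (ht : t ∈ U) :
    f t * h s = f s * h t := by
  have hq : ∀ t ∈ U, HasDerivAt (fun t ↦ f t / h t) 0 t := fun t ht ↦
    ((hf t ht).div (hh t ht) (hh0 t ht)).congr_deriv (by rw [hW t ht, sub_self, zero_div])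
  have := hU.is_const_of_deriv_eq_zero hUc
    (fun t ht ↦ (hq t ht).differentiableAt.differentiableWithinAt)
    (fun t ht ↦ (hq t ht).deriv) ht hs
  exact (div_eq_div_iff (hh0 t ht) (hh0 s hs)).mp this

end Calculus

/-! ### Line-framed curves and reflective orbits -/

/-- A real analytic line-framed curve in the plane: a regular curve `point` with an analytic
transverse field `dir`. Only the values on `domain` matter; regularity of `point` is part of
transversality. -/
structure LineFramedCurve where
  domain : Set ℝ
  point : ℝ → ℝ × ℝ
  dir : ℝ → ℝ × ℝ
  isOpen_domain : IsOpen domain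
  isPreconnected_domain : IsPreconnected domain
  analyticOnNhd_point : AnalyticOnNhd ℝ point domain
  analyticOnNhd_dir : AnalyticOnNhd ℝ dir domain
  deriv_wedge_dir_ne_zero : ∀ t ∈ domain, deriv point t ⋏ dir t ≠ 0

namespace LineFramedCurve

/-- The velocity of the curve. -/
noncomputable def vel (γ : LineFramedCurve) : ℝ → ℝ × ℝ := deriv γ.point

/-- The acceleration of the curve. The curve has zero curvature at `t` iff
`γ.vel t ⋏ γ.acc t = 0`. -/
noncomputable def acc (γ : LineFramedCurve) : ℝ → ℝ × ℝ := deriv γ.vel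

/-- The signed height of `x` over the tangent line at time `t`, up to the factor `‖γ.vel t‖`. -/
noncomputable def height (γ : LineFramedCurve) (t : ℝ) (x : ℝ × ℝ) : ℝ :=
  γ.vel t ⋏ (x - γ.point t)

/-- The logarithmic derivative in `t` of `γ.height t x`; a junk value on the tangent line. -/
noncomputable def rate (γ : LineFramedCurve) (t : ℝ) (x : ℝ × ℝ) : ℝ :=
  γ.acc t ⋏ (x - γ.point t) / γ.height t x

section Curve

variable {γ : LineFramedCurve} {r : ℝ → ℝ} {r' τ : ℝ}

theorem hasDerivAt_point_comp (hr : HasDerivAt r r' τ) (h : r τ ∈ γ.domain) :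
    HasDerivAt (fun τ ↦ γ.point (r τ)) (r' • γ.vel (r τ)) τ :=
  (γ.analyticOnNhd_point _ h).differentiableAt.hasDerivAt.scomp τ hr

theorem hasDerivAt_vel_comp (hr : HasDerivAt r r' τ) (h : r τ ∈ γ.domain) :
    HasDerivAt (fun τ ↦ γ.vel (r τ)) (r' • γ.acc (r τ)) τ :=
  (γ.analyticOnNhd_point.deriv _ h).differentiableAt.hasDerivAt.scomp τ hr

theorem hasDerivAt_dir_comp (hr : HasDerivAt r r' τ) (h : r τ ∈ γ.domain) :
    HasDerivAt (fun τ ↦ γ.dir (r τ)) (r' • deriv γ.dir (r τ)) τ :=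
  (γ.analyticOnNhd_dir _ h).differentiableAt.hasDerivAt.scomp τ hr

end Curve

theorem hasDerivAt_height {γ δ : LineFramedCurve} {r x : ℝ → ℝ} {r' x' τ : ℝ}
    (hr : HasDerivAt r r' τ) (hx : HasDerivAt x x' τ) (hrγ : r τ ∈ γ.domain)
    (hxδ : x τ ∈ δ.domain) :
    HasDerivAt (fun τ ↦ γ.height (r τ) (δ.point (x τ)))
      (r' * γ.acc (r τ) ⋏ (δ.point (x τ) - γ.point (r τ)) + x' * γ.vel (r τ) ⋏ δ.vel (x τ)) τ := by
  refine (hasDerivAt_wedge (hasDerivAt_vel_comp hr hrγ)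
    ((hasDerivAt_point_comp hx hxδ).sub (hasDerivAt_point_comp hr hrγ))).congr_deriv ?_
  simp only [wedge, Pi.sub_apply, Prod.fst_sub, Prod.snd_sub, Prod.smul_fst, Prod.smul_snd,
    smul_eq_mul]
  ring

/-- The reflection law at time `t` for the lines from `γ.point t` to `x` and `y`, both transverse
to the curve. -/
structure ReflectsAt (γ : LineFramedCurve) (t : ℝ) (x y : ℝ × ℝ) : Prop where
  height_left_ne_zero : γ.height t x ≠ 0
  height_right_ne_zero : γ.height t y ≠ 0
  harmonic : harmonicForm (γ.dir t) (γ.vel t) (x - γ.point t) (y - γ.point t) = 0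

theorem ReflectsAt.symm {γ : LineFramedCurve} {t : ℝ} {x y : ℝ × ℝ} (h : γ.ReflectsAt t x y) :
    γ.ReflectsAt t y x :=
  ⟨h.height_right_ne_zero, h.height_left_ne_zero, (harmonicForm_comm _ _ _ _).trans h.harmonic⟩

theorem ReflectsAt.of_planeSym {γ : LineFramedCurve} {t : ℝ} {x y : ℝ × ℝ} (ht : t ∈ γ.domain)
    (hx : x - γ.point t ∉ Submodule.span ℝ {deriv γ.point t})
    (hy : y - γ.point t ∉ Submodule.span ℝ {deriv γ.point t})
    (h : PlaneSym ℝ (γ.dir t) (deriv γ.point t) (x - γ.point t) (y - γ.point t)) :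
    γ.ReflectsAt t x y :=
  have vel_ne : deriv γ.point t ≠ 0 := fun h0 ↦
    γ.deriv_wedge_dir_ne_zero t ht (by simp [h0, wedge])
  ⟨(wedge_eq_zero_iff_mem_span vel_ne).not.mpr hx, (wedge_eq_zero_iff_mem_span vel_ne).not.mpr hy,
    h.harmonicForm_eq_zero⟩

theorem ReflectsAt.vel_wedge_acc_eq_zero {γ : LineFramedCurve} {t : ℝ} {x y : ℝ × ℝ}
    (h : γ.ReflectsAt t x y) (hxy : (x - γ.point t) ⋏ (y - γ.point t) ≠ 0)
    (hrate : γ.rate t x = γ.rate t y) : γ.vel t ⋏ γ.acc t = 0 := by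
  have cross := (div_eq_div_iff h.height_left_ne_zero h.height_right_ne_zero).mp hrate
  refine (mul_eq_zero_iff_right hxy).mp ?_
  simp only [height, wedge] at cross ⊢
  linear_combination -cross

end LineFramedCurve

open LineFramedCurve

variable {γ₁ γ₂ γ₃ : LineFramedCurve}

/-- A nondegenerate triangular billiard orbit with vertices on `γ₁`, `γ₂`, `γ₃` at times
`s`, `u`, `t`. -/
structure IsReflectiveOrbit (γ₁ γ₂ γ₃ : LineFramedCurve) (s u t : ℝ) : Prop where
  mem₁ : s ∈ γ₁.domain
  mem₂ : u ∈ γ₂.domain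
  mem₃ : t ∈ γ₃.domain
  nondegenerate : (γ₂.point u - γ₁.point s) ⋏ (γ₃.point t - γ₁.point s) ≠ 0
  reflectsAt₁ : γ₁.ReflectsAt s (γ₂.point u) (γ₃.point t)
  reflectsAt₂ : γ₂.ReflectsAt u (γ₃.point t) (γ₁.point s)
  reflectsAt₃ : γ₃.ReflectsAt t (γ₁.point s) (γ₂.point u)

theorem IsReflectiveOrbit.rotate {s u t : ℝ} (h : IsReflectiveOrbit γ₁ γ₂ γ₃ s u t) :
    IsReflectiveOrbit γ₂ γ₃ γ₁ u t s where
  mem₁ := h.mem₂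
  mem₂ := h.mem₃
  mem₃ := h.mem₁
  nondegenerate := by
    convert h.nondegenerate using 1
    simp only [wedge, Prod.fst_sub, Prod.snd_sub]
    ring
  reflectsAt₁ := h.reflectsAt₂
  reflectsAt₂ := h.reflectsAt₃
  reflectsAt₃ := h.reflectsAt₁

/-- A path of orbits with velocity `(s', u', t')` at time `0`. -/
structure OrbitPath (γ₁ γ₂ γ₃ : LineFramedCurve) (s u t : ℝ → ℝ) (s' u' t' : ℝ) : Prop where
  hasDerivAt₁ : HasDerivAt s s' 0
  hasDerivAt₂ : HasDerivAt u u' 0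
  hasDerivAt₃ : HasDerivAt t t' 0
  eventually_isReflectiveOrbit : ∀ᶠ τ in 𝓝 0, IsReflectiveOrbit γ₁ γ₂ γ₃ (s τ) (u τ) (t τ)

/-- By Menelaus' theorem, this holds when the tangent lines at the vertices of the triangle meet
the opposite sides in three collinear points. -/
def MenelausRelation (γ₁ γ₂ γ₃ : LineFramedCurve) (s u t : ℝ) : Prop :=
  γ₁.height s (γ₂.point u) * γ₂.height u (γ₃.point t) * γ₃.height t (γ₁.point s) =
    γ₁.height s (γ₃.point t) * γ₂.height u (γ₁.point s) * γ₃.height t (γ₂.point u)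

theorem MenelausRelation.rotate {s u t : ℝ} (h : MenelausRelation γ₁ γ₂ γ₃ s u t) :
    MenelausRelation γ₂ γ₃ γ₁ u t s := by
  unfold MenelausRelation at *
  linear_combination h

namespace OrbitPath

variable {s u t : ℝ → ℝ} {s' u' t' : ℝ}

theorem rotate (h : OrbitPath γ₁ γ₂ γ₃ s u t s' u' t') : OrbitPath γ₂ γ₃ γ₁ u t s u' t' s' :=
  ⟨h.hasDerivAt₂, h.hasDerivAt₃, h.hasDerivAt₁,
    h.eventually_isReflectiveOrbit.mono fun _ ↦ IsReflectiveOrbit.rotate⟩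

theorem isReflectiveOrbit (h : OrbitPath γ₁ γ₂ γ₃ s u t s' u' t') :
    IsReflectiveOrbit γ₁ γ₂ γ₃ (s 0) (u 0) (t 0) :=
  h.eventually_isReflectiveOrbit.self_of_nhds

theorem variation_of_fixed_vertex (h : OrbitPath γ₁ γ₂ γ₃ s u t 0 u' t') :
    γ₁.height (s 0) (γ₃.point (t 0)) ^ 2 * γ₂.height (u 0) (γ₁.point (s 0)) * u' +
      γ₁.height (s 0) (γ₂.point (u 0)) ^ 2 * γ₃.height (t 0) (γ₁.point (s 0)) * t' = 0 := by
  have orbit := h.isReflectiveOrbit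
  have hA := hasDerivAt_point_comp h.hasDerivAt₁ orbit.mem₁
  have variation := ((hasDerivAt_harmonicForm (hasDerivAt_dir_comp h.hasDerivAt₁ orbit.mem₁)
    (hasDerivAt_vel_comp h.hasDerivAt₁ orbit.mem₁)
    ((hasDerivAt_point_comp h.hasDerivAt₂ orbit.mem₂).sub hA)
    ((hasDerivAt_point_comp h.hasDerivAt₃ orbit.mem₃).sub hA)).congr_of_eventuallyEq
      (h.eventually_isReflectiveOrbit.mono fun _ ho ↦ ho.reflectsAt₁.harmonic.symm)).unique
    (hasDerivAt_const (0 : ℝ) (0 : ℝ))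
  have linearized := variation_of_harmonicForm (x := γ₂.vel (u 0)) (y := γ₃.vel (t 0))
    (β := u') (γ := t') orbit.reflectsAt₁.harmonic
    (γ₁.deriv_wedge_dir_ne_zero _ orbit.mem₁) orbit.nondegenerate
    orbit.reflectsAt₁.height_left_ne_zero (by
      simp only [harmonicForm, wedge, Prod.fst_sub, Prod.snd_sub, Prod.smul_fst, Prod.smul_snd,
        smul_eq_mul, Pi.sub_apply] at variation ⊢
      linear_combination variation)
  simp only [height, wedge, Prod.fst_sub, Prod.snd_sub] at linearized ⊢
  linear_combination linearized

end OrbitPath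

theorem height_mul_vel_wedge_vel (γ₁ γ₂ γ₃ : LineFramedCurve) (s u t : ℝ) :
    γ₂.height u (γ₁.point s) * γ₃.vel t ⋏ γ₁.vel s +
        γ₃.height t (γ₁.point s) * γ₁.vel s ⋏ γ₂.vel u =
      γ₃.height t (γ₂.point u) * γ₁.vel s ⋏ γ₂.vel u +
        γ₁.height s (γ₂.point u) * γ₂.vel u ⋏ γ₃.vel t := by
  simp only [height, wedge, Prod.fst_sub, Prod.snd_sub]
  ring

theorem IsReflectiveOrbit.exists_common_numerator {s u t : ℝ}
    (h : IsReflectiveOrbit γ₁ γ₂ γ₃ s u t) :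
    ∃ N : ℝ,
      γ₃.vel t ⋏ γ₁.vel s / γ₃.height t (γ₁.point s) +
          γ₁.vel s ⋏ γ₂.vel u / γ₂.height u (γ₁.point s) =
        N / (γ₃.height t (γ₁.point s) * γ₂.height u (γ₁.point s)) ∧
      γ₁.vel s ⋏ γ₂.vel u / γ₁.height s (γ₂.point u) +
          γ₂.vel u ⋏ γ₃.vel t / γ₃.height t (γ₂.point u) =
        N / (γ₁.height s (γ₂.point u) * γ₃.height t (γ₂.point u)) ∧
      γ₂.vel u ⋏ γ₃.vel t / γ₂.height u (γ₃.point t) +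
          γ₃.vel t ⋏ γ₁.vel s / γ₁.height s (γ₃.point t) =
        N / (γ₂.height u (γ₃.point t) * γ₁.height s (γ₃.point t)) := by
  have at_A := height_mul_vel_wedge_vel γ₁ γ₂ γ₃ s u t
  have at_B := height_mul_vel_wedge_vel γ₂ γ₃ γ₁ u t s
  refine ⟨_, div_add_div _ _ h.reflectsAt₃.height_left_ne_zero
    h.reflectsAt₂.height_right_ne_zero, ?_, ?_⟩
  · rw [div_add_div _ _ h.reflectsAt₁.height_left_ne_zero h.reflectsAt₃.height_right_ne_zero]
    congr 1
    linear_combination -at_A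
  · rw [div_add_div _ _ h.reflectsAt₂.height_left_ne_zero h.reflectsAt₁.height_right_ne_zero]
    congr 1
    linear_combination -at_A - at_B

theorem OrbitPath.sum_rate_eq_zero {s u t : ℝ → ℝ} {s' u' t' : ℝ}
    (h : OrbitPath γ₁ γ₂ γ₃ s u t s' u' t')
    (hM : ∀ᶠ τ in 𝓝 0, MenelausRelation γ₁ γ₂ γ₃ (s τ) (u τ) (t τ))
    (hn : s' / (γ₃.height (t 0) (γ₁.point (s 0)) * γ₂.height (u 0) (γ₁.point (s 0))) +
      u' / (γ₁.height (s 0) (γ₂.point (u 0)) * γ₃.height (t 0) (γ₂.point (u 0))) +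
      t' / (γ₂.height (u 0) (γ₃.point (t 0)) * γ₁.height (s 0) (γ₃.point (t 0))) = 0) :
    s' * (γ₁.rate (s 0) (γ₃.point (t 0)) - γ₁.rate (s 0) (γ₂.point (u 0))) +
      u' * (γ₂.rate (u 0) (γ₁.point (s 0)) - γ₂.rate (u 0) (γ₃.point (t 0))) +
      t' * (γ₃.rate (t 0) (γ₂.point (u 0)) - γ₃.rate (t 0) (γ₁.point (s 0))) = 0 := by
  have orbit := h.isReflectiveOrbit
  have log_menelaus := sum_div_eq_of_prod_eq hM
    (hasDerivAt_height h.hasDerivAt₁ h.hasDerivAt₂ orbit.mem₁ orbit.mem₂)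
    (hasDerivAt_height h.hasDerivAt₂ h.hasDerivAt₃ orbit.mem₂ orbit.mem₃)
    (hasDerivAt_height h.hasDerivAt₃ h.hasDerivAt₁ orbit.mem₃ orbit.mem₁)
    (hasDerivAt_height h.hasDerivAt₁ h.hasDerivAt₃ orbit.mem₁ orbit.mem₃)
    (hasDerivAt_height h.hasDerivAt₂ h.hasDerivAt₁ orbit.mem₂ orbit.mem₁)
    (hasDerivAt_height h.hasDerivAt₃ h.hasDerivAt₂ orbit.mem₃ orbit.mem₂)
    (mul_ne_zero (mul_ne_zero orbit.reflectsAt₁.height_left_ne_zero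
      orbit.reflectsAt₂.height_left_ne_zero) orbit.reflectsAt₃.height_left_ne_zero)
  obtain ⟨N, coeff₁, coeff₂, coeff₃⟩ := orbit.exists_common_numerator
  rw [wedge_anticomm (γ₁.vel (s 0)) (γ₃.vel (t 0)), wedge_anticomm (γ₂.vel (u 0)) (γ₁.vel (s 0)),
    wedge_anticomm (γ₃.vel (t 0)) (γ₂.vel (u 0))] at log_menelaus
  simp only [rate]
  linear_combination s' * coeff₁ + u' * coeff₂ + t' * coeff₃ + N * hn - log_menelaus

theorem menelaus_of_first_order {a₂ a₃ b₁ b₃ c₁ c₂ p q : ℝ} (ha₃ : a₃ ≠ 0)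
    (hb₃ : b₃ ≠ 0) (hc₁ : c₁ ≠ 0) (hc₂ : c₂ ≠ 0)
    (h₁ : b₁ ^ 2 * c₂ + c₁ ^ 2 * b₃ * q = 0) (h₂ : c₂ ^ 2 * a₃ * p + a₂ ^ 2 * c₁ = 0)
    (h₃ : a₃ ^ 2 * b₁ * q - b₃ ^ 2 * a₂ * p = 0) :
    c₁ * a₂ * b₃ = b₁ * c₂ * a₃ ∧ p * b₃ * c₂ = -(a₂ * b₁) ∧ q * a₃ * c₁ = -(a₂ * b₁) := by
  have cubes : (c₁ * a₂ * b₃) ^ 3 = (b₁ * c₂ * a₃) ^ 3 := by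
    linear_combination -b₁ * a₃ ^ 3 * c₂ ^ 2 * h₁ + c₁ ^ 2 * b₃ ^ 3 * a₂ * h₂
      + c₁ ^ 2 * c₂ ^ 2 * b₃ * a₃ * h₃
  have menelaus : c₁ * a₂ * b₃ = b₁ * c₂ * a₃ := Odd.pow_injective (by decide) cubes
  refine ⟨menelaus, mul_left_cancel₀ (mul_ne_zero ha₃ hc₂) ?_,
    mul_left_cancel₀ (mul_ne_zero hb₃ hc₁) ?_⟩
  · linear_combination b₃ * h₂ - a₂ * menelaus
  · linear_combination a₃ * h₁ + b₁ * menelaus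

/-! ### Two-parameter families of orbits -/

/-- A two-parameter family of orbits: the third vertex `g (s, u)` is a `C²` function of the other
two parameters. -/
structure ReflectiveFamily (γ₁ γ₂ γ₃ : LineFramedCurve) (Ω : Set (ℝ × ℝ)) (g : ℝ × ℝ → ℝ) :
    Prop where
  isOpen : IsOpen Ω
  isReflectiveOrbit : ∀ z ∈ Ω, IsReflectiveOrbit γ₁ γ₂ γ₃ z.1 z.2 (g z)
  contDiffAt : ∀ z ∈ Ω, ContDiffAt ℝ 2 g z

namespace ReflectiveFamily

variable {Ω : Set (ℝ × ℝ)} {g : ℝ × ℝ → ℝ} {z : ℝ × ℝ}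

theorem of_continuousOn (hΩ : IsOpen Ω) (hg : ContinuousOn g Ω)
    (h : ∀ z ∈ Ω, IsReflectiveOrbit γ₁ γ₂ γ₃ z.1 z.2 (g z)) : ReflectiveFamily γ₁ γ₂ γ₃ Ω g where
  isOpen := hΩ
  isReflectiveOrbit := h
  contDiffAt z hz := by
    obtain ⟨mem₁, mem₂, mem₃, nondegenerate, r₁, -, r₃⟩ := h z hz
    let law (x : (ℝ × ℝ) × ℝ) : ℝ := harmonicForm (γ₁.dir x.1.1) (γ₁.vel x.1.1)
      (γ₂.point x.1.2 - γ₁.point x.1.1) (γ₃.point x.2 - γ₁.point x.1.1)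
    have smooth : ContDiffAt ℝ 2 law (z, g z) := by
      have fst : AnalyticAt ℝ (fun x : (ℝ × ℝ) × ℝ ↦ x.1.1) (z, g z) :=
        analyticAt_fst.comp analyticAt_fst
      have snd : AnalyticAt ℝ (fun x : (ℝ × ℝ) × ℝ ↦ x.1.2) (z, g z) :=
        analyticAt_snd.comp analyticAt_fst
      have hA := (γ₁.analyticOnNhd_point _ mem₁).comp_of_eq fst rfl
      exact (analyticAt_harmonicForm ((γ₁.analyticOnNhd_dir _ mem₁).comp_of_eq fst rfl)
        ((γ₁.analyticOnNhd_point.deriv _ mem₁).comp_of_eq fst rfl)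
        (((γ₂.analyticOnNhd_point _ mem₂).comp_of_eq snd rfl).sub hA)
        (((γ₃.analyticOnNhd_point _ mem₃).comp_of_eq analyticAt_snd rfl).sub hA)).contDiffAt
    have partial_deriv : HasDerivAt (fun r ↦ law (z, r)) (harmonicForm (γ₁.dir z.1)
        (γ₁.vel z.1) (γ₂.point z.2 - γ₁.point z.1) (γ₃.vel (g z))) (g z) :=
      (hasDerivAt_harmonicForm (hasDerivAt_const (g z) (γ₁.dir z.1))
        (hasDerivAt_const (g z) (γ₁.vel z.1))
        (hasDerivAt_const (g z) (γ₂.point z.2 - γ₁.point z.1))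
        ((γ₃.analyticOnNhd_point _ mem₃).differentiableAt.hasDerivAt.sub_const
          (γ₁.point z.1))).congr_deriv (by simp [harmonicForm, wedge, vel])
    have transverse : γ₃.vel (g z) ⋏ (γ₃.point (g z) - γ₁.point z.1) ≠ 0 := fun h0 ↦
      r₃.height_left_ne_zero (by
        simp only [height, wedge, Prod.fst_sub, Prod.snd_sub] at h0 ⊢
        linear_combination -h0)
    -- The implicit function theorem, applied to the reflection law at the first vertex.
    exact contDiffAt_of_implicit (n := 2) two_ne_zero smooth partial_deriv
      (harmonicForm_ne_zero r₁.harmonic (γ₁.deriv_wedge_dir_ne_zero _ mem₁) nondegenerate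
        r₁.height_left_ne_zero transverse) (hg.continuousAt (hΩ.mem_nhds hz))
      ((hΩ.eventually_mem hz).mono fun y hy ↦ (h y hy).reflectsAt₁.harmonic)

theorem eventually_mem (h : ReflectiveFamily γ₁ γ₂ γ₃ Ω g) (hz : z ∈ Ω) (v : ℝ × ℝ) :
    ∀ᶠ τ : ℝ in 𝓝 0, z + τ • v ∈ Ω :=
  (hasDerivAt_add_smul z v (0 : ℝ)).continuousAt.eventually_mem (h.isOpen.mem_nhds (by simpa))

theorem orbitPath (h : ReflectiveFamily γ₁ γ₂ γ₃ Ω g) (hz : z ∈ Ω) (v : ℝ × ℝ) :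
    OrbitPath γ₁ γ₂ γ₃ (fun τ ↦ (z + τ • v).1) (fun τ ↦ (z + τ • v).2)
      (fun τ ↦ g (z + τ • v)) v.1 v.2 (fderiv ℝ g z v) where
  hasDerivAt₁ := (hasDerivAt_add_smul z v (0 : ℝ)).fst
  hasDerivAt₂ := (hasDerivAt_add_smul z v (0 : ℝ)).snd
  hasDerivAt₃ :=
    ((h.contDiffAt z hz).differentiableAt two_ne_zero).hasFDerivAt.hasLineDerivAt v
  eventually_isReflectiveOrbit := (h.eventually_mem hz v).mono fun _ ↦ h.isReflectiveOrbit _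

theorem first_order_relations (h : ReflectiveFamily γ₁ γ₂ γ₃ Ω g) (hz : z ∈ Ω) :
    MenelausRelation γ₁ γ₂ γ₃ z.1 z.2 (g z) ∧
      fderiv ℝ g z (1, 0) * γ₃.height (g z) (γ₁.point z.1) * γ₂.height z.2 (γ₁.point z.1) =
        -(γ₂.height z.2 (γ₃.point (g z)) * γ₁.height z.1 (γ₃.point (g z))) ∧
      fderiv ℝ g z (0, 1) * γ₃.height (g z) (γ₂.point z.2) * γ₁.height z.1 (γ₂.point z.2) =
        -(γ₂.height z.2 (γ₃.point (g z)) * γ₁.height z.1 (γ₃.point (g z))) := by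
  obtain ⟨-, -, -, -, r₁, r₂, r₃⟩ := h.isReflectiveOrbit z hz
  set p := fderiv ℝ g z (1, 0)
  set q := fderiv ℝ g z (0, 1)
  have fixed₁ := (h.orbitPath hz (0, 1)).variation_of_fixed_vertex
  have fixed₂ := (h.orbitPath hz (1, 0)).rotate.variation_of_fixed_vertex
  have level : fderiv ℝ g z (q, -p) = 0 := by
    have : ((q, -p) : ℝ × ℝ) = q • (1, 0) - p • (0, 1) := by simp
    rw [this, map_sub, map_smul, map_smul, smul_eq_mul, smul_eq_mul, mul_comm, sub_self]
  have fixed₃ := (level ▸ h.orbitPath hz (q, -p)).rotate.rotate.variation_of_fixed_vertex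
  simp only [zero_smul, add_zero] at fixed₁ fixed₂ fixed₃
  exact menelaus_of_first_order r₃.height_right_ne_zero r₃.height_left_ne_zero
    r₁.height_left_ne_zero
    r₂.height_right_ne_zero (by linear_combination fixed₁) (by linear_combination fixed₂)
    (by linear_combination fixed₃)

theorem rate_relation_of_fixed_snd (h : ReflectiveFamily γ₁ γ₂ γ₃ Ω g) (hz : z ∈ Ω) :
    γ₁.rate z.1 (γ₃.point (g z)) - γ₁.rate z.1 (γ₂.point z.2) + fderiv ℝ g z (1, 0) *
      (γ₃.rate (g z) (γ₂.point z.2) - γ₃.rate (g z) (γ₁.point z.1)) = 0 := by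
  obtain ⟨-, gs_eq, -⟩ := h.first_order_relations hz
  obtain ⟨-, -, -, -, r₁, r₂, r₃⟩ := h.isReflectiveOrbit z hz
  have := (h.orbitPath hz (1, 0)).sum_rate_eq_zero
    ((h.eventually_mem hz (1, 0)).mono fun _ hτ ↦ (h.first_order_relations hτ).1)
  simp only [zero_smul, add_zero, zero_div, zero_mul, one_mul] at this
  refine this ?_
  rw [div_add_div _ _ (mul_ne_zero r₃.height_left_ne_zero r₂.height_right_ne_zero)
    (mul_ne_zero r₂.height_left_ne_zero r₁.height_right_ne_zero), div_eq_zero_iff]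
  left
  linear_combination gs_eq

theorem rate_relation_of_fixed_fst (h : ReflectiveFamily γ₁ γ₂ γ₃ Ω g) (hz : z ∈ Ω) :
    γ₂.rate z.2 (γ₁.point z.1) - γ₂.rate z.2 (γ₃.point (g z)) + fderiv ℝ g z (0, 1) *
      (γ₃.rate (g z) (γ₂.point z.2) - γ₃.rate (g z) (γ₁.point z.1)) = 0 := by
  obtain ⟨-, -, gu_eq⟩ := h.first_order_relations hz
  obtain ⟨-, -, -, -, r₁, r₂, r₃⟩ := h.isReflectiveOrbit z hz
  have := (h.orbitPath hz (0, 1)).sum_rate_eq_zero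
    ((h.eventually_mem hz (0, 1)).mono fun _ hτ ↦ (h.first_order_relations hτ).1)
  simp only [zero_smul, add_zero, zero_div, zero_mul, one_mul, zero_add] at this
  refine this ?_
  rw [div_add_div _ _ (mul_ne_zero r₁.height_left_ne_zero r₃.height_right_ne_zero)
    (mul_ne_zero r₂.height_left_ne_zero r₁.height_right_ne_zero), div_eq_zero_iff]
  left
  linear_combination gu_eq

theorem fderiv_ne_zero (h : ReflectiveFamily γ₁ γ₂ γ₃ Ω g) (hz : z ∈ Ω) :
    fderiv ℝ g z (1, 0) ≠ 0 ∧ fderiv ℝ g z (0, 1) ≠ 0 := by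
  obtain ⟨-, gs_eq, gu_eq⟩ := h.first_order_relations hz
  obtain ⟨-, -, -, -, r₁, r₂, -⟩ := h.isReflectiveOrbit z hz
  have hne := neg_ne_zero.mpr (mul_ne_zero r₂.height_left_ne_zero r₁.height_right_ne_zero)
  exact ⟨left_ne_zero_of_mul (left_ne_zero_of_mul (gs_eq.trans_ne hne)),
    left_ne_zero_of_mul (left_ne_zero_of_mul (gu_eq.trans_ne hne))⟩

theorem mixed_partial_div_fst (h : ReflectiveFamily γ₁ γ₂ γ₃ Ω g) (hz : z ∈ Ω) {G : ℝ}
    (hG : HasLineDerivAt ℝ (fun z ↦ fderiv ℝ g z (1, 0)) G z (0, 1)) :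
    G / fderiv ℝ g z (1, 0) =
      γ₂.rate z.2 (γ₃.point (g z)) - γ₂.rate z.2 (γ₁.point z.1) + fderiv ℝ g z (0, 1) *
        (γ₂.vel z.2 ⋏ γ₃.vel (g z) / γ₂.height z.2 (γ₃.point (g z)) +
          γ₁.vel z.1 ⋏ γ₃.vel (g z) / γ₁.height z.1 (γ₃.point (g z)) -
          γ₃.rate (g z) (γ₁.point z.1)) := by
  have path := h.orbitPath hz (0, 1)
  obtain ⟨mem₁, mem₂, mem₃, -, -, r₂, r₃⟩ := path.isReflectiveOrbit
  have relation : ∀ᶠ τ : ℝ in 𝓝 0, _ := (h.eventually_mem hz (0, 1)).mono fun τ hτ ↦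
    (h.first_order_relations hτ).2.1.trans (by rw [neg_mul_eq_neg_mul, ← neg_one_mul])
  have logDeriv := sum_div_eq_of_prod_eq relation hG
    (hasDerivAt_height path.hasDerivAt₃ path.hasDerivAt₁ mem₃ mem₁)
    (hasDerivAt_height path.hasDerivAt₂ path.hasDerivAt₁ mem₂ mem₁)
    (hasDerivAt_const 0 (-1))
    (hasDerivAt_height path.hasDerivAt₂ path.hasDerivAt₃ mem₂ mem₃)
    (hasDerivAt_height path.hasDerivAt₁ path.hasDerivAt₃ mem₁ mem₃)
    (mul_ne_zero (mul_ne_zero (by simpa using (h.fderiv_ne_zero hz).1) r₃.height_left_ne_zero)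
      r₂.height_right_ne_zero)
  simp only [zero_smul, add_zero, zero_div, zero_mul, one_mul, zero_add] at logDeriv
  simp only [rate]
  linear_combination logDeriv

theorem mixed_partial_div_snd (h : ReflectiveFamily γ₁ γ₂ γ₃ Ω g) (hz : z ∈ Ω) {G : ℝ}
    (hG : HasLineDerivAt ℝ (fun z ↦ fderiv ℝ g z (0, 1)) G z (1, 0)) :
    G / fderiv ℝ g z (0, 1) =
      γ₁.rate z.1 (γ₃.point (g z)) - γ₁.rate z.1 (γ₂.point z.2) + fderiv ℝ g z (1, 0) *
        (γ₂.vel z.2 ⋏ γ₃.vel (g z) / γ₂.height z.2 (γ₃.point (g z)) +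
          γ₁.vel z.1 ⋏ γ₃.vel (g z) / γ₁.height z.1 (γ₃.point (g z)) -
          γ₃.rate (g z) (γ₂.point z.2)) := by
  have path := h.orbitPath hz (1, 0)
  obtain ⟨mem₁, mem₂, mem₃, -, r₁, -, r₃⟩ := path.isReflectiveOrbit
  have relation : ∀ᶠ τ : ℝ in 𝓝 0, _ := (h.eventually_mem hz (1, 0)).mono fun τ hτ ↦
    (h.first_order_relations hτ).2.2.trans (by rw [neg_mul_eq_neg_mul, ← neg_one_mul])
  have logDeriv := sum_div_eq_of_prod_eq relation hG
    (hasDerivAt_height path.hasDerivAt₃ path.hasDerivAt₂ mem₃ mem₂)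
    (hasDerivAt_height path.hasDerivAt₁ path.hasDerivAt₂ mem₁ mem₂)
    (hasDerivAt_const 0 (-1))
    (hasDerivAt_height path.hasDerivAt₂ path.hasDerivAt₃ mem₂ mem₃)
    (hasDerivAt_height path.hasDerivAt₁ path.hasDerivAt₃ mem₁ mem₃)
    (mul_ne_zero (mul_ne_zero (by simpa using (h.fderiv_ne_zero hz).2) r₃.height_right_ne_zero)
      r₁.height_left_ne_zero)
  simp only [zero_smul, add_zero, zero_div, zero_mul, one_mul, zero_add] at logDeriv
  simp only [rate]
  linear_combination logDeriv

theorem rate_eq_rate (h : ReflectiveFamily γ₁ γ₂ γ₃ Ω g) (hz : z ∈ Ω) :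
    γ₁.rate z.1 (γ₃.point (g z)) = γ₁.rate z.1 (γ₂.point z.2) ∧
      γ₂.rate z.2 (γ₁.point z.1) = γ₂.rate z.2 (γ₃.point (g z)) ∧
      γ₃.rate (g z) (γ₂.point z.2) = γ₃.rate (g z) (γ₁.point z.1) := by
  obtain ⟨gs_ne, gu_ne⟩ := h.fderiv_ne_zero hz
  obtain ⟨G, hGs, hGu⟩ := exists_hasLineDerivAt_fderiv (h.contDiffAt z hz) (1, 0) (0, 1)
  have mixed₁ := (div_eq_iff gs_ne).mp (h.mixed_partial_div_fst hz hGs)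
  have mixed₂ := (div_eq_iff gu_ne).mp (h.mixed_partial_div_snd hz hGu)
  have rel₁ := h.rate_relation_of_fixed_snd hz
  have rel₂ := h.rate_relation_of_fixed_fst hz
  have rates₃ : γ₃.rate (g z) (γ₂.point z.2) - γ₃.rate (g z) (γ₁.point z.1) = 0 := by
    refine (mul_eq_zero_iff_left (mul_ne_zero gs_ne gu_ne)).mp ?_
    linear_combination (mixed₂ - mixed₁ + fderiv ℝ g z (1, 0) * rel₂ +
      fderiv ℝ g z (0, 1) * rel₁) / 3
  rw [rates₃, mul_zero, add_zero] at rel₁ rel₂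
  exact ⟨sub_eq_zero.mp rel₁, sub_eq_zero.mp rel₂, sub_eq_zero.mp rates₃⟩

theorem vel_wedge_acc_eq_zero (h : ReflectiveFamily γ₁ γ₂ γ₃ Ω g) (hz : z ∈ Ω) :
    γ₁.vel z.1 ⋏ γ₁.acc z.1 = 0 ∧ γ₂.vel z.2 ⋏ γ₂.acc z.2 = 0 ∧
      γ₃.vel (g z) ⋏ γ₃.acc (g z) = 0 := by
  obtain ⟨rates₁, rates₂, rates₃⟩ := h.rate_eq_rate hz
  have orbit := h.isReflectiveOrbit z hz
  exact ⟨orbit.reflectsAt₁.vel_wedge_acc_eq_zero orbit.nondegenerate rates₁.symm,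
    orbit.reflectsAt₂.vel_wedge_acc_eq_zero orbit.rotate.nondegenerate rates₂.symm,
    orbit.reflectsAt₃.vel_wedge_acc_eq_zero orbit.rotate.rotate.nondegenerate rates₃.symm⟩

end ReflectiveFamily

/-! ### The projective triangle -/

section Homogeneous

variable {K : Type*} [Field K]

/-- The linear form on homogeneous coordinates whose kernel is the projective line through the
point `x` with direction `v`. -/
def lineForm (x v : K × K) : K × K × K →ₗ[K] K where
  toFun X := v ⋏ ((X.1, X.2.1) - X.2.2 • x)
  map_add' X Y := by
    simp only [wedge, Prod.fst_add, Prod.snd_add, Prod.fst_sub, Prod.snd_sub, Prod.smul_fst,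
      Prod.smul_snd, smul_eq_mul]
    ring
  map_smul' c X := by
    simp only [wedge, Prod.fst_sub, Prod.snd_sub, Prod.smul_fst, Prod.smul_snd, smul_eq_mul,
      RingHom.id_apply]
    ring

theorem lineForm_apply (x v : K × K) (X : K × K × K) :
    lineForm x v X = v ⋏ ((X.1, X.2.1) - X.2.2 • x) :=
  rfl

theorem lineForm_liftPt (x v y : K × K) : lineForm x v (liftPt K y) = v ⋏ (y - x) := by
  rw [lineForm_apply, liftPt, one_smul]

theorem lineForm_eq_zero_iff_mem_span {x v : K × K} (hv : v ≠ 0) {X : K × K × K} :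
    lineForm x v X = 0 ↔ X ∈ Submodule.span K {liftPt K x, liftDir K v} := by
  rw [lineForm_apply, wedge_eq_zero_iff_mem_span hv, Submodule.mem_span_singleton,
    Submodule.mem_span_pair]
  constructor
  · rintro ⟨k, hk⟩
    refine ⟨X.2.2, k, ?_⟩
    simp only [Prod.ext_iff, liftPt, liftDir, Prod.fst_sub, Prod.snd_sub, Prod.smul_fst,
      Prod.smul_snd, Prod.fst_add, Prod.snd_add, smul_eq_mul] at hk ⊢
    exact ⟨by linear_combination hk.1, by linear_combination hk.2, by ring⟩
  · rintro ⟨c, k, rfl⟩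
    exact ⟨k, Prod.ext (by simp [liftPt, liftDir]) (by simp [liftPt, liftDir])⟩

theorem exists_basis_repr_eq {ι V : Type*} [Fintype ι] [AddCommGroup V] [Module K V]
    [FiniteDimensional K V] (hV : Module.finrank K V = Fintype.card ι) (f : ι → V →ₗ[K] K)
    (hf : ∀ x, (∀ i, f i x = 0) → x = 0) :
    ∃ b : Module.Basis ι K V, ∀ i x, b.repr x i = f i x :=
  have inj : Function.Injective (LinearMap.pi f) :=
    (injective_iff_map_eq_zero _).mpr fun x hx ↦ hf x fun i ↦ congr_fun hx i
  ⟨.ofEquivFun (.ofInjectiveOfFinrankEq _ inj (by rw [hV, Module.finrank_fintype_fun_eq_card])),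
    fun _ _ ↦ rfl⟩

theorem exists_triangle_of_ker {V : Type*} [AddCommGroup V] [Module K V] [FiniteDimensional K V]
    (hV : Module.finrank K V = 3) {f₁ f₂ f₃ : V →ₗ[K] K}
    (hf : ∀ x, f₁ x = 0 → f₂ x = 0 → f₃ x = 0 → x = 0) :
    ∃ P Q R : V, LinearIndependent K ![P, Q, R] ∧ f₁.ker = Submodule.span K {P, Q} ∧
      f₂.ker = Submodule.span K {Q, R} ∧ f₃.ker = Submodule.span K {R, P} := by
  obtain ⟨b, hb⟩ := exists_basis_repr_eq hV ![f₂, f₃, f₁] fun x hx ↦ hf x (hx 2) (hx 0) (hx 1)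
  have dual {i j : Fin 3} (hij : i ≠ j) : ![f₂, f₃, f₁] i (b j) = 0 := by
    rw [← hb, b.repr_self, Finsupp.single_eq_of_ne hij]
  have expansion (x : V) : f₂ x • b 0 + f₃ x • b 1 + f₁ x • b 2 = x := by
    conv_rhs => rw [← b.sum_repr x, Fin.sum_univ_three, hb, hb, hb]
    rfl
  have ker_eq {f : V →ₗ[K] K} {x y : V} (hx : f x = 0) (hy : f y = 0)
      (h : ∀ z, f z = 0 → ∃ c d : K, c • x + d • y = z) : f.ker = Submodule.span K {x, y} :=
    le_antisymm (fun z hz ↦ Submodule.mem_span_pair.mpr (h z hz))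
      (Submodule.span_le.mpr (Set.pair_subset hx hy))
  refine ⟨b 0, b 1, b 2, ?_,
    ker_eq (dual (i := 2) (by decide)) (dual (i := 2) (by decide)) fun z hz ↦
      ⟨f₂ z, f₃ z, by simpa [hz] using expansion z⟩,
    ker_eq (dual (i := 0) (by decide)) (dual (i := 0) (by decide)) fun z hz ↦
      ⟨f₃ z, f₁ z, by simpa [hz] using expansion z⟩,
    ker_eq (dual (i := 1) (by decide)) (dual (i := 1) (by decide)) fun z hz ↦
      ⟨f₁ z, f₂ z, by simpa [hz, add_comm] using expansion z⟩⟩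
  rw [show ![b 0, b 1, b 2] = b from FinVec.etaExpand_eq b]
  exact b.linearIndependent

end Homogeneous

namespace LineFramedCurve

/-- A linear form defining the tangent line at time `t`. -/
noncomputable def tangentForm (γ : LineFramedCurve) (t : ℝ) : ℝ × ℝ × ℝ →ₗ[ℝ] ℝ :=
  lineForm (γ.point t) (γ.vel t)

/-- A linear form defining the field line at time `t`. -/
noncomputable def fieldForm (γ : LineFramedCurve) (t : ℝ) : ℝ × ℝ × ℝ →ₗ[ℝ] ℝ :=
  lineForm (γ.point t) (γ.dir t)

variable {γ : LineFramedCurve} {t₀ : ℝ}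

theorem dir_ne_zero {t : ℝ} (ht : t ∈ γ.domain) : γ.dir t ≠ 0 := fun h ↦
  γ.deriv_wedge_dir_ne_zero t ht (by simp [h, wedge])

theorem tangentForm_liftPt_point (γ : LineFramedCurve) (t : ℝ) :
    γ.tangentForm t (liftPt ℝ (γ.point t)) = 0 := by
  simp [tangentForm, lineForm_liftPt, wedge]

theorem eq_smul_liftPt_of_tangentForm_of_fieldForm {t : ℝ} (ht : t ∈ γ.domain) {X : ℝ × ℝ × ℝ}
    (hT : γ.tangentForm t X = 0) (hF : γ.fieldForm t X = 0) :
    X = X.2.2 • liftPt ℝ (γ.point t) := by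
  have := sub_eq_zero.mp
    (eq_zero_of_wedge_eq_zero (γ.deriv_wedge_dir_ne_zero t ht) hT hF)
  exact Prod.ext (congr_arg Prod.fst this :)
    (Prod.ext (congr_arg Prod.snd this :) (mul_one X.2.2).symm)

theorem eventually_tangentForm_eq_zero_iff (ht₀ : t₀ ∈ γ.domain)
    (hκ : ∀ᶠ t in 𝓝 t₀, γ.vel t ⋏ γ.acc t = 0) :
    ∀ᶠ t in 𝓝 t₀, ∀ X, γ.tangentForm t X = 0 ↔ γ.tangentForm t₀ X = 0 := by
  have hvel {t} (ht : t ∈ γ.domain) : HasDerivAt γ.vel (γ.acc t) t :=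
    (γ.analyticOnNhd_point.deriv t ht).differentiableAt.hasDerivAt
  have htransverse : ∀ t ∈ γ.domain,
      HasDerivAt (fun t ↦ γ.vel t ⋏ γ.dir t₀) (γ.acc t ⋏ γ.dir t₀) t := fun t ht ↦
    (hasDerivAt_wedge (hvel ht) (hasDerivAt_const t _)).congr_deriv (by simp [wedge])
  have hnear : ∀ᶠ t in 𝓝 t₀,
      t ∈ γ.domain ∧ γ.vel t ⋏ γ.acc t = 0 ∧ γ.vel t ⋏ γ.dir t₀ ≠ 0 :=
    (γ.isOpen_domain.eventually_mem ht₀).and (hκ.and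
      ((htransverse t₀ ht₀).continuousAt.eventually_ne (γ.deriv_wedge_dir_ne_zero t₀ ht₀)))
  obtain ⟨ε, hε, hball⟩ := Metric.eventually_nhds_iff_ball.mp hnear
  have htangent (X : ℝ × ℝ × ℝ) : ∀ t ∈ γ.domain, HasDerivAt (fun t ↦ γ.tangentForm t X)
      (γ.acc t ⋏ ((X.1, X.2.1) - X.2.2 • γ.point t)) t := fun t ht ↦
    (hasDerivAt_wedge (hvel ht) ((hasDerivAt_const t _).sub
      ((γ.analyticOnNhd_point t ht).differentiableAt.hasDerivAt.const_smul X.2.2))).congr_deriv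
      (by simp [wedge, vel]; ring)
  filter_upwards [Metric.ball_mem_nhds t₀ hε] with t ht X
  have proportional := mul_eq_mul_of_wronskian_eq_zero Metric.isOpen_ball
    (convex_ball t₀ ε).isPreconnected (fun t ht ↦ htangent X t (hball t ht).1)
    (fun t ht ↦ htransverse t (hball t ht).1) (fun t ht ↦ (hball t ht).2.2)
    (fun t ht ↦ by
      have plucker := wedge_mul_wedge (γ.vel t) (γ.acc t)
        ((X.1, X.2.1) - X.2.2 • γ.point t) (γ.dir t₀)
      rw [(hball t ht).2.1] at plucker
      rw [tangentForm, lineForm_apply]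
      linear_combination plucker) (Metric.mem_ball_self hε) ht
  rw [← mul_eq_zero_iff_right (hball t₀ (Metric.mem_ball_self hε)).2.2, proportional,
    mul_eq_zero_iff_right (hball t ht).2.2]

theorem forall_mem_of_eventually_mem_line (ht₀ : t₀ ∈ γ.domain) (f : ℝ × ℝ × ℝ →ₗ[ℝ] ℝ)
    (h : ∀ᶠ t in 𝓝 t₀, f (liftPt ℝ (γ.point t)) = 0) :
    ∀ t ∈ γ.domain, f (liftPt ℝ (γ.point t)) = 0 := by
  have analytic : AnalyticOnNhd ℝ (fun t ↦ f (liftPt ℝ (γ.point t))) γ.domain := fun t ht ↦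
    have hpoint := γ.analyticOnNhd_point t ht
    (f.toContinuousLinearMap.analyticAt _).comp ((analyticAt_fst.comp hpoint).prod
      ((analyticAt_snd.comp hpoint).prod analyticAt_const))
  exact analytic.eqOn_zero_of_preconnected_of_eventuallyEq_zero γ.isPreconnected_domain ht₀ h

theorem forall_fieldForm_eq_zero_of_eventually (ht₀ : t₀ ∈ γ.domain) {X : ℝ × ℝ × ℝ}
    (h : ∀ᶠ t in 𝓝 t₀, γ.fieldForm t X = 0) : ∀ t ∈ γ.domain, γ.fieldForm t X = 0 := by
  have analytic : AnalyticOnNhd ℝ (fun t ↦ γ.fieldForm t X) γ.domain := fun t ht ↦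
    analyticAt_wedge (γ.analyticOnNhd_dir t ht)
      (analyticAt_const.sub (γ.analyticOnNhd_point t ht).fun_const_smul)
  exact analytic.eqOn_zero_of_preconnected_of_eventuallyEq_zero γ.isPreconnected_domain ht₀ h

end LineFramedCurve

namespace IsReflectiveOrbit

variable {s u t : ℝ}

theorem height_mul_vel_wedge_dir (h : IsReflectiveOrbit γ₁ γ₂ γ₃ s u t)
    (hM : MenelausRelation γ₁ γ₂ γ₃ s u t) :
    γ₂.height u (γ₁.point s) * γ₃.vel t ⋏ γ₁.dir s =
      γ₃.height t (γ₁.point s) * γ₂.vel u ⋏ γ₁.dir s := by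
  have harmonic := h.reflectsAt₁.harmonic
  refine mul_left_cancel₀ (mul_ne_zero h.nondegenerate h.reflectsAt₁.height_left_ne_zero) ?_
  unfold MenelausRelation at hM
  unfold harmonicForm at harmonic
  linear_combination (norm := (simp only [height, wedge, Prod.fst_sub, Prod.snd_sub]; ring))
    γ₂.height u (γ₁.point s) * γ₃.height t (γ₂.point u) * harmonic +
      γ₁.dir s ⋏ (γ₂.point u - γ₁.point s) * hM

theorem fieldForm_eq_zero (h : IsReflectiveOrbit γ₁ γ₂ γ₃ s u t)
    (hM : MenelausRelation γ₁ γ₂ γ₃ s u t) {X : ℝ × ℝ × ℝ} (h₂ : γ₂.tangentForm u X = 0)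
    (h₃ : γ₃.tangentForm t X = 0) : γ₁.fieldForm s X = 0 := by
  have concurrent := h.height_mul_vel_wedge_dir hM
  refine (mul_eq_zero_iff_left (mul_ne_zero h.reflectsAt₂.height_right_ne_zero
    h.reflectsAt₃.height_right_ne_zero)).mp ?_
  linear_combination (norm := (simp only [tangentForm, fieldForm, lineForm_apply, height, wedge,
      Prod.fst_sub, Prod.snd_sub, Prod.smul_fst, Prod.smul_snd, smul_eq_mul]; ring))
    γ₁.dir s ⋏ (γ₂.point u - γ₁.point s) *
      (γ₂.height u (γ₁.point s) * h₃ - γ₃.height t (γ₁.point s) * h₂) +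
        (γ₂.point u - γ₁.point s) ⋏ ((X.1, X.2.1) - X.2.2 • γ₁.point s) * concurrent

theorem eq_zero_of_tangentForm_eq_zero (h : IsReflectiveOrbit γ₁ γ₂ γ₃ s u t)
    (hM : MenelausRelation γ₁ γ₂ γ₃ s u t) {X : ℝ × ℝ × ℝ} (h₁ : γ₁.tangentForm s X = 0)
    (h₂ : γ₂.tangentForm u X = 0) (h₃ : γ₃.tangentForm t X = 0) : X = 0 := by
  have hX := eq_smul_liftPt_of_tangentForm_of_fieldForm h.mem₁ h₁ (h.fieldForm_eq_zero hM h₂ h₃)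
  rw [hX, map_smul, smul_eq_mul, tangentForm, lineForm_liftPt] at h₂
  rw [hX, (mul_eq_zero_iff_right h.reflectsAt₂.height_right_ne_zero).mp h₂, zero_smul]

end IsReflectiveOrbit

namespace ReflectiveFamily

variable {Ω : Set (ℝ × ℝ)} {g : ℝ × ℝ → ℝ} {z : ℝ × ℝ}

theorem eventually_vertices_iff (h : ReflectiveFamily γ₁ γ₂ γ₃ Ω g) (hz : z ∈ Ω)
    {p₁ p₂ p₃ : ℝ → Prop} :
    (∀ᶠ y in 𝓝 z, p₁ y.1 ∧ p₂ y.2 ∧ p₃ (g y)) ↔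
      (∀ᶠ s in 𝓝 z.1, p₁ s) ∧ (∀ᶠ u in 𝓝 z.2, p₂ u) ∧ ∀ᶠ t in 𝓝 (g z), p₃ t := by
  have onto : (fderiv ℝ g z).range = ⊤ :=
    LinearMap.range_eq_top.mpr <| LinearMap.surjective_of_ne_zero fun h0 ↦
      (h.fderiv_ne_zero hz).1 (LinearMap.congr_fun h0 (1, 0))
  rw [← map_fst_nhds, ← map_snd_nhds,
    ← ((h.contDiffAt z hz).hasStrictFDerivAt two_ne_zero).map_nhds_eq_of_surj onto]
  simp only [eventually_map, eventually_and]

theorem eventually_tangentForm_eq_zero_iff (h : ReflectiveFamily γ₁ γ₂ γ₃ Ω g) (hz : z ∈ Ω) :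
    ∀ᶠ y in 𝓝 z,
      (∀ X, γ₁.tangentForm y.1 X = 0 ↔ γ₁.tangentForm z.1 X = 0) ∧
      (∀ X, γ₂.tangentForm y.2 X = 0 ↔ γ₂.tangentForm z.2 X = 0) ∧
      (∀ X, γ₃.tangentForm (g y) X = 0 ↔ γ₃.tangentForm (g z) X = 0) := by
  have orbit := h.isReflectiveOrbit z hz
  obtain ⟨flat₁, flat₂, flat₃⟩ := (h.eventually_vertices_iff hz
    (p₁ := fun s ↦ γ₁.vel s ⋏ γ₁.acc s = 0) (p₂ := fun u ↦ γ₂.vel u ⋏ γ₂.acc u = 0)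
    (p₃ := fun t ↦ γ₃.vel t ⋏ γ₃.acc t = 0)).mp
    ((h.isOpen.eventually_mem hz).mono fun _ ↦ h.vel_wedge_acc_eq_zero)
  exact (h.eventually_vertices_iff hz (p₁ := fun s ↦ ∀ X, _)).mpr
    ⟨LineFramedCurve.eventually_tangentForm_eq_zero_iff orbit.mem₁ flat₁,
      LineFramedCurve.eventually_tangentForm_eq_zero_iff orbit.mem₂ flat₂,
      LineFramedCurve.eventually_tangentForm_eq_zero_iff orbit.mem₃ flat₃⟩

theorem tangentForm_liftPt_eq_zero (h : ReflectiveFamily γ₁ γ₂ γ₃ Ω g) (hz : z ∈ Ω) :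
    (∀ s ∈ γ₁.domain, γ₁.tangentForm z.1 (liftPt ℝ (γ₁.point s)) = 0) ∧
      (∀ u ∈ γ₂.domain, γ₂.tangentForm z.2 (liftPt ℝ (γ₂.point u)) = 0) ∧
      (∀ t ∈ γ₃.domain, γ₃.tangentForm (g z) (liftPt ℝ (γ₃.point t)) = 0) := by
  have orbit := h.isReflectiveOrbit z hz
  obtain ⟨on₁, on₂, on₃⟩ := (h.eventually_vertices_iff hz
    (p₁ := fun s ↦ γ₁.tangentForm z.1 (liftPt ℝ (γ₁.point s)) = 0)
    (p₂ := fun u ↦ γ₂.tangentForm z.2 (liftPt ℝ (γ₂.point u)) = 0)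
    (p₃ := fun t ↦ γ₃.tangentForm (g z) (liftPt ℝ (γ₃.point t)) = 0)).mp
    ((h.eventually_tangentForm_eq_zero_iff hz).mono fun y ⟨fixed₁, fixed₂, fixed₃⟩ ↦
      ⟨(fixed₁ _).mp (tangentForm_liftPt_point γ₁ y.1),
        (fixed₂ _).mp (tangentForm_liftPt_point γ₂ y.2),
        (fixed₃ _).mp (tangentForm_liftPt_point γ₃ (g y))⟩)
  exact ⟨forall_mem_of_eventually_mem_line orbit.mem₁ _ on₁,
    forall_mem_of_eventually_mem_line orbit.mem₂ _ on₂,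
    forall_mem_of_eventually_mem_line orbit.mem₃ _ on₃⟩

theorem fieldForm_eq_zero (h : ReflectiveFamily γ₁ γ₂ γ₃ Ω g) (hz : z ∈ Ω) {P Q R : ℝ × ℝ × ℝ}
    (side₁ : (γ₁.tangentForm z.1).ker = Submodule.span ℝ {P, Q})
    (side₂ : (γ₂.tangentForm z.2).ker = Submodule.span ℝ {Q, R})
    (side₃ : (γ₃.tangentForm (g z)).ker = Submodule.span ℝ {R, P}) :
    (∀ s ∈ γ₁.domain, γ₁.fieldForm s R = 0) ∧ (∀ u ∈ γ₂.domain, γ₂.fieldForm u P = 0) ∧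
      (∀ t ∈ γ₃.domain, γ₃.fieldForm t Q = 0) := by
  have left_mem {f : ℝ × ℝ × ℝ →ₗ[ℝ] ℝ} {x y} (hf : f.ker = Submodule.span ℝ {x, y}) : f x = 0 :=
    hf.ge (Submodule.subset_span (Set.mem_insert x {y}))
  have right_mem {f : ℝ × ℝ × ℝ →ₗ[ℝ] ℝ} {x y} (hf : f.ker = Submodule.span ℝ {x, y}) : f y = 0 :=
    hf.ge (Submodule.subset_span (Set.mem_insert_of_mem x rfl))
  obtain ⟨through₁, through₂, through₃⟩ := (h.eventually_vertices_iff hz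
    (p₁ := fun s ↦ γ₁.fieldForm s R = 0) (p₂ := fun u ↦ γ₂.fieldForm u P = 0)
    (p₃ := fun t ↦ γ₃.fieldForm t Q = 0)).mp (by
      filter_upwards [h.isOpen.eventually_mem hz, h.eventually_tangentForm_eq_zero_iff hz]
        with y hy ⟨fixed₁, fixed₂, fixed₃⟩
      have orbit := h.isReflectiveOrbit y hy
      have menelaus := (h.first_order_relations hy).1
      exact ⟨orbit.fieldForm_eq_zero menelaus
          ((fixed₂ R).mpr (right_mem side₂)) ((fixed₃ R).mpr (left_mem side₃)),
        orbit.rotate.fieldForm_eq_zero menelaus.rotate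
          ((fixed₃ P).mpr (right_mem side₃)) ((fixed₁ P).mpr (left_mem side₁)),
        orbit.rotate.rotate.fieldForm_eq_zero menelaus.rotate.rotate
          ((fixed₁ Q).mpr (right_mem side₁)) ((fixed₂ Q).mpr (left_mem side₂))⟩)
  have orbit := h.isReflectiveOrbit z hz
  exact ⟨forall_fieldForm_eq_zero_of_eventually orbit.mem₁ through₁,
    forall_fieldForm_eq_zero_of_eventually orbit.mem₂ through₂,
    forall_fieldForm_eq_zero_of_eventually orbit.mem₃ through₃⟩

theorem exists_triangle (h : ReflectiveFamily γ₁ γ₂ γ₃ Ω g) (hz : z ∈ Ω) :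
    ∃ P Q R : ℝ × ℝ × ℝ, LinearIndependent ℝ ![P, Q, R] ∧
      (∀ s ∈ γ₁.domain, liftPt ℝ (γ₁.point s) ∈ Submodule.span ℝ {P, Q} ∧
        R ∈ Submodule.span ℝ {liftPt ℝ (γ₁.point s), liftDir ℝ (γ₁.dir s)}) ∧
      (∀ u ∈ γ₂.domain, liftPt ℝ (γ₂.point u) ∈ Submodule.span ℝ {Q, R} ∧
        P ∈ Submodule.span ℝ {liftPt ℝ (γ₂.point u), liftDir ℝ (γ₂.dir u)}) ∧
      (∀ t ∈ γ₃.domain, liftPt ℝ (γ₃.point t) ∈ Submodule.span ℝ {R, P} ∧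
        Q ∈ Submodule.span ℝ {liftPt ℝ (γ₃.point t), liftDir ℝ (γ₃.dir t)}) := by
  obtain ⟨P, Q, R, hPQR, side₁, side₂, side₃⟩ := exists_triangle_of_ker (by simp)
    fun X ↦ (h.isReflectiveOrbit z hz).eq_zero_of_tangentForm_eq_zero
      (h.first_order_relations hz).1
  obtain ⟨point₁, point₂, point₃⟩ := h.tangentForm_liftPt_eq_zero hz
  obtain ⟨field₁, field₂, field₃⟩ := h.fieldForm_eq_zero hz side₁ side₂ side₃
  exact ⟨P, Q, R, hPQR,
    fun s hs ↦ ⟨side₁.le (point₁ s hs),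
      (lineForm_eq_zero_iff_mem_span (dir_ne_zero hs)).mp (field₁ s hs)⟩,
    fun u hu ↦ ⟨side₂.le (point₂ u hu),
      (lineForm_eq_zero_iff_mem_span (dir_ne_zero hu)).mp (field₂ u hu)⟩,
    fun t ht ↦ ⟨side₃.le (point₃ t ht),
      (lineForm_eq_zero_iff_mem_span (dir_ne_zero ht)).mp (field₃ t ht)⟩⟩

end ReflectiveFamily

/-- **Theorem 1.3, real analytic case.** Every 3-reflective triple of real analytic
line-framed curves in `ℝ²` is right-spherical. -/
theorem three_reflective_real_analytic_planar_is_right_spherical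
    (U₁ U₂ U₃ : Set ℝ) (a₁ a₂ a₃ v₁ v₂ v₃ : ℝ → ℝ × ℝ)
    (hU₁o : IsOpen U₁) (hU₂o : IsOpen U₂) (hU₃o : IsOpen U₃)
    (hU₁c : IsConnected U₁) (hU₂c : IsConnected U₂) (hU₃c : IsConnected U₃)
    -- the `(aᵢ, vᵢ)` are real analytic line-framed curves
    (ha₁ : AnalyticOnNhd ℝ a₁ U₁) (ha₂ : AnalyticOnNhd ℝ a₂ U₂)
    (ha₃ : AnalyticOnNhd ℝ a₃ U₃)
    (ha₁i : Set.InjOn a₁ U₁) (ha₂i : Set.InjOn a₂ U₂) (ha₃i : Set.InjOn a₃ U₃)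
    (ha₁' : ∀ s ∈ U₁, deriv a₁ s ≠ 0) (ha₂' : ∀ u ∈ U₂, deriv a₂ u ≠ 0)
    (ha₃' : ∀ t ∈ U₃, deriv a₃ t ≠ 0)
    (hv₁ : AnalyticOnNhd ℝ v₁ U₁) (hv₂ : AnalyticOnNhd ℝ v₂ U₂)
    (hv₃ : AnalyticOnNhd ℝ v₃ U₃)
    (hv₁t : ∀ s ∈ U₁, v₁ s ∉ Submodule.span ℝ {deriv a₁ s})
    (hv₂t : ∀ u ∈ U₂, v₂ u ∉ Submodule.span ℝ {deriv a₂ u})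
    (hv₃t : ∀ t ∈ U₃, v₃ t ∉ Submodule.span ℝ {deriv a₃ t})
    -- 3-reflectivity data (Ω, g)
    (Ω : Set (ℝ × ℝ)) (g : ℝ × ℝ → ℝ)
    (hΩo : IsOpen Ω) (hΩne : Ω.Nonempty) (hΩ : Ω ⊆ U₁ ×ˢ U₂)
    (hg : ContinuousOn g Ω) (hgm : ∀ z ∈ Ω, g z ∈ U₃)
    -- (i) vertices not collinear
    (hcol : ∀ z ∈ Ω, ¬ Collinear ℝ {a₁ z.1, a₂ z.2, a₃ (g z)})
    -- (ii) non-tangency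
    (htan₁ : ∀ z ∈ Ω, a₂ z.2 - a₁ z.1 ∉ Submodule.span ℝ {deriv a₁ z.1} ∧
      a₃ (g z) - a₁ z.1 ∉ Submodule.span ℝ {deriv a₁ z.1})
    (htan₂ : ∀ z ∈ Ω, a₁ z.1 - a₂ z.2 ∉ Submodule.span ℝ {deriv a₂ z.2} ∧
      a₃ (g z) - a₂ z.2 ∉ Submodule.span ℝ {deriv a₂ z.2})
    (htan₃ : ∀ z ∈ Ω, a₁ z.1 - a₃ (g z) ∉ Submodule.span ℝ {deriv a₃ (g z)} ∧
      a₂ z.2 - a₃ (g z) ∉ Submodule.span ℝ {deriv a₃ (g z)})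
    -- (iii) reflection law at each vertex
    (href₁ : ∀ z ∈ Ω,
      PlaneSym ℝ (v₁ z.1) (deriv a₁ z.1) (a₂ z.2 - a₁ z.1) (a₃ (g z) - a₁ z.1))
    (href₂ : ∀ z ∈ Ω,
      PlaneSym ℝ (v₂ z.2) (deriv a₂ z.2) (a₁ z.1 - a₂ z.2) (a₃ (g z) - a₂ z.2))
    (href₃ : ∀ z ∈ Ω,
      PlaneSym ℝ (v₃ (g z)) (deriv a₃ (g z)) (a₁ z.1 - a₃ (g z)) (a₂ z.2 - a₃ (g z))) :
    ∃ P Q R : ℝ × ℝ × ℝ, LinearIndependent ℝ ![P, Q, R] ∧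
      (∀ s ∈ U₁, liftPt ℝ (a₁ s) ∈ Submodule.span ℝ {P, Q} ∧
        R ∈ Submodule.span ℝ {liftPt ℝ (a₁ s), liftDir ℝ (v₁ s)}) ∧
      (∀ u ∈ U₂, liftPt ℝ (a₂ u) ∈ Submodule.span ℝ {Q, R} ∧
        P ∈ Submodule.span ℝ {liftPt ℝ (a₂ u), liftDir ℝ (v₂ u)}) ∧
      (∀ t ∈ U₃, liftPt ℝ (a₃ t) ∈ Submodule.span ℝ {R, P} ∧
        Q ∈ Submodule.span ℝ {liftPt ℝ (a₃ t), liftDir ℝ (v₃ t)}) := by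
  let γ₁ : LineFramedCurve := ⟨U₁, a₁, v₁, hU₁o, hU₁c.isPreconnected, ha₁, hv₁, fun s hs ↦
    (wedge_eq_zero_iff_mem_span (ha₁' s hs)).not.mpr (hv₁t s hs)⟩
  let γ₂ : LineFramedCurve := ⟨U₂, a₂, v₂, hU₂o, hU₂c.isPreconnected, ha₂, hv₂, fun u hu ↦
    (wedge_eq_zero_iff_mem_span (ha₂' u hu)).not.mpr (hv₂t u hu)⟩
  let γ₃ : LineFramedCurve := ⟨U₃, a₃, v₃, hU₃o, hU₃c.isPreconnected, ha₃, hv₃, fun t ht ↦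
    (wedge_eq_zero_iff_mem_span (ha₃' t ht)).not.mpr (hv₃t t ht)⟩
  have family : ReflectiveFamily γ₁ γ₂ γ₃ Ω g := .of_continuousOn hΩo hg fun z hz ↦
    { mem₁ := (hΩ hz).1
      mem₂ := (hΩ hz).2
      mem₃ := hgm z hz
      nondegenerate := wedge_ne_zero_of_not_collinear (hcol z hz)
      reflectsAt₁ := .of_planeSym (hΩ hz).1 (htan₁ z hz).1 (htan₁ z hz).2 (href₁ z hz)
      reflectsAt₂ := .symm <|
        .of_planeSym (hΩ hz).2 (htan₂ z hz).1 (htan₂ z hz).2 (href₂ z hz)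
      reflectsAt₃ := .of_planeSym (hgm z hz) (htan₃ z hz).1 (htan₃ z hz).2 (href₃ z hz) }
  obtain ⟨z, hz⟩ := hΩne
  exact family.exists_triangle hz
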